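/- Let g : [0,T] → ℝ be three times continuously differentiable, h > 0, t₀ = 0, t_{1/2} = h/2, t₁ = h, t₂ = 2h ≤ T. Then |g(t₂) − (3 g(t₀) − 8 g(t_{1/2}) + 6 g(t₁))| ≤ (‖g‴‖_∞ / 2) h³, where ‖g‴‖_∞ = sup_{t∈[0,T]} |g‴(t)|. -/

import Mathlib

open Real

/-!
Let `p` interpolate `f` at `n` nodes and let `ω` be the nodal polynomial. For `x` not a node, some
`q = p + c ω` interpolates `f` at `x` as well, so `f - q` has `n + 1` zeros. By repeated use of
Rolle's theorem its `n`-th derivative `f⁽ⁿ⁾ - n! c` vanishes at some `ξ`, whence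
`f x - p x = c ω x = f⁽ⁿ⁾ ξ / n! * ω x`. For the nodes `0, h/2, h` and `x = 2h` one has
`ω x = 3h³`, and the Lagrange basis polynomials take the values `3, -8, 6` at `x`.
-/

section GeneralizedRolle

open Set

variable {s : Set ℝ} {f : ℝ → ℝ} {n : ℕ}

theorem exists_strictMono_derivWithin_eq_zero (hs : s.OrdConnected) (hf : ContinuousOn f s)
    {x : Fin (n + 1) → ℝ} (hx : StrictMono x) (hxs : ∀ i, x i ∈ s) (hfx : ∀ i, f (x i) = 0) :
    ∃ y : Fin n → ℝ, StrictMono y ∧ ∀ i, y i ∈ s ∧ derivWithin f s (y i) = 0 := by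
  have hIcc (i : Fin n) : Icc (x i.castSucc) (x i.succ) ⊆ s := hs.out (hxs _) (hxs _)
  have rolle (i : Fin n) : ∃ c ∈ Ioo (x i.castSucc) (x i.succ), deriv f c = 0 :=
    exists_deriv_eq_zero (hx i.castSucc_lt_succ) (hf.mono (hIcc i)) ((hfx _).trans (hfx _).symm)
  choose y hy hfy using rolle
  refine ⟨y, fun i j hij ↦ ?_, fun i ↦ ⟨hIcc i (Ioo_subset_Icc_self (hy i)), ?_⟩⟩
  · calc y i < x i.succ := (hy i).2
      _ ≤ x j.castSucc := hx.monotone (Fin.succ_le_castSucc_iff.2 hij)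
      _ < y j := (hy j).1
  · rw [derivWithin_of_mem_nhds (Filter.mem_of_superset (Icc_mem_nhds (hy i).1 (hy i).2) (hIcc i)),
      hfy i]

theorem exists_iteratedDerivWithin_eq_zero_of_strictMono (hs : s.OrdConnected)
    (hf : ∀ k < n, ContinuousOn (iteratedDerivWithin k f s) s) {x : Fin (n + 1) → ℝ}
    (hx : StrictMono x) (hxs : ∀ i, x i ∈ s) (hfx : ∀ i, f (x i) = 0) :
    ∃ ξ ∈ s, iteratedDerivWithin n f s ξ = 0 := by
  induction n generalizing f with
  | zero => exact ⟨x 0, hxs 0, by rw [iteratedDerivWithin_zero, hfx 0]⟩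
  | succ n ih =>
    have hf₀ : ContinuousOn f s := by simpa only [iteratedDerivWithin_zero] using hf 0 n.succ_pos
    have hf' : ∀ k < n, ContinuousOn (iteratedDerivWithin k (derivWithin f s) s) s := fun k hk ↦ by
      simpa only [iteratedDerivWithin_succ'] using hf (k + 1) (Nat.succ_lt_succ hk)
    obtain ⟨y, hy, hys⟩ := exists_strictMono_derivWithin_eq_zero hs hf₀ hx hxs hfx
    obtain ⟨ξ, hξ, hξ₀⟩ := ih hf' hy (fun i ↦ (hys i).1) fun i ↦ (hys i).2
    exact ⟨ξ, hξ, by rw [iteratedDerivWithin_succ', hξ₀]⟩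

theorem exists_iteratedDerivWithin_eq_zero_of_lt_card (hs : s.OrdConnected)
    (hf : ∀ k < n, ContinuousOn (iteratedDerivWithin k f s) s) {t : Finset ℝ} (ht : n < t.card)
    (hts : ∀ x ∈ t, x ∈ s) (hft : ∀ x ∈ t, f x = 0) :
    ∃ ξ ∈ s, iteratedDerivWithin n f s ξ = 0 :=
  have hmem := t.orderEmbOfCardLe_mem ht
  exists_iteratedDerivWithin_eq_zero_of_strictMono hs hf (t.orderEmbOfCardLe ht).strictMono
    (fun i ↦ hts _ (hmem i)) fun i ↦ hft _ (hmem i)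

end GeneralizedRolle

section PolynomialDerivatives

open Polynomial
open scoped Nat

theorem iterate_derivative_eq_C_of_natDegree_le {R : Type*} [Semiring R] {p : R[X]} {n : ℕ}
    (hp : p.natDegree ≤ n) : derivative^[n] p = C (n ! * p.coeff n) := by
  have hdeg : (derivative^[n] p).natDegree ≤ 0 :=
    (natDegree_iterate_derivative p n).trans (Nat.sub_eq_zero_of_le hp).le
  rw [eq_C_of_natDegree_le_zero hdeg, coeff_iterate_derivative, zero_add, Nat.descFactorial_self,
    nsmul_eq_mul]

theorem iteratedDerivWithin_polynomial_eval {𝕜 : Type*} [NontriviallyNormedField 𝕜] {s : Set 𝕜}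
    (hs : UniqueDiffOn 𝕜 s) (p : 𝕜[X]) (n : ℕ) {x : 𝕜} (hx : x ∈ s) :
    iteratedDerivWithin n (fun y ↦ p.eval y) s x = (derivative^[n] p).eval x := by
  induction n generalizing p with
  | zero => rw [iteratedDerivWithin_zero, Function.iterate_zero_apply]
  | succ n ih =>
    have hderiv : s.EqOn (derivWithin (fun y ↦ p.eval y) s) fun y ↦ (derivative p).eval y :=
      fun y hy ↦ p.derivWithin (hs y hy)
    rw [iteratedDerivWithin_succ', iteratedDerivWithin_congr hderiv hx, ih,
      Function.iterate_succ_apply]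

end PolynomialDerivatives

section NewtonForm

open Polynomial Lagrange

theorem exists_newton_interpolant {F ι : Type*} [Field F] [DecidableEq ι] {t : Finset ι} {v : ι → F}
    (hv : Set.InjOn v t) {x : F} (hx : ∀ i ∈ t, x ≠ v i) (r : ι → F) (y : F) :
    ∃ q : F[X], q.natDegree ≤ t.card ∧ (∀ i ∈ t, q.eval (v i) = r i) ∧ q.eval x = y ∧
      y - (interpolate t v r).eval x = q.coeff t.card * (nodal t v).eval x := by
  have hω : (nodal t v).eval x ≠ 0 := eval_nodal_not_at_node hx
  set p := interpolate t v r
  have hp : p.degree < t.card := degree_interpolate_lt r hv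
  set c := (y - p.eval x) / (nodal t v).eval x
  have hc : c * (nodal t v).eval x = y - p.eval x := div_mul_cancel₀ _ hω
  have hlead : (nodal t v).coeff t.card = 1 := by
    simpa only [natDegree_nodal] using (nodal_monic (s := t) (v := v)).coeff_natDegree
  refine ⟨p + C c * nodal t v, ?_, fun i hi ↦ ?_, ?_, ?_⟩
  · exact natDegree_add_le_of_degree_le (natDegree_le_of_degree_le hp.le)
      ((natDegree_C_mul_le _ _).trans natDegree_nodal.le)
  · rw [eval_add, eval_mul, eval_interpolate_at_node r hv hi, eval_nodal_at_node hi, mul_zero,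
      add_zero]
  · rw [eval_add, eval_mul, eval_C, hc, add_sub_cancel]
  · rw [coeff_add, coeff_eq_zero_of_degree_lt hp, coeff_C_mul, hlead, mul_one, zero_add, hc]

end NewtonForm

section InterpolationError

open Polynomial Lagrange
open scoped Nat

variable {s : Set ℝ} {f : ℝ → ℝ} {n : ℕ}

theorem exists_iteratedDerivWithin_eq_factorial_mul_coeff (hs : s.OrdConnected)
    (hu : UniqueDiffOn ℝ s) (hf : ContDiffOn ℝ n f s) {p : ℝ[X]} (hp : p.natDegree ≤ n)
    {t : Finset ℝ} (ht : n < t.card) (hts : ∀ y ∈ t, y ∈ s) (hft : ∀ y ∈ t, f y = p.eval y) :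
    ∃ ξ ∈ s, iteratedDerivWithin n f s ξ = n ! * p.coeff n := by
  have hpc : ContDiffOn ℝ n (fun y ↦ p.eval y) s := (p.contDiff_aeval n).contDiffOn
  have hcont : ∀ k < n, ContinuousOn (iteratedDerivWithin k (f - fun y ↦ p.eval y) s) s :=
    fun k hk ↦ (hf.sub hpc).continuousOn_iteratedDerivWithin (by exact_mod_cast hk.le) hu
  obtain ⟨ξ, hξ, hξ₀⟩ := exists_iteratedDerivWithin_eq_zero_of_lt_card hs hcont ht hts
    fun y hy ↦ sub_eq_zero.2 (hft y hy)
  rw [iteratedDerivWithin_sub hξ hu (hf ξ hξ) (hpc ξ hξ), sub_eq_zero,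
    iteratedDerivWithin_polynomial_eval hu p n hξ, iterate_derivative_eq_C_of_natDegree_le hp,
    eval_C] at hξ₀
  exact ⟨ξ, hξ, hξ₀⟩

variable {ι : Type*} [DecidableEq ι] {t : Finset ι} {v : ι → ℝ} {x : ℝ}

theorem exists_sub_eval_interpolate_eq (hs : s.OrdConnected) (hu : UniqueDiffOn ℝ s)
    (hf : ContDiffOn ℝ n f s) (ht : t.card = n) (hv : Set.InjOn v t) (hvs : ∀ i ∈ t, v i ∈ s)
    (hx : x ∈ s) :
    ∃ ξ ∈ s, f x - (interpolate t v fun i ↦ f (v i)).eval x =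
      iteratedDerivWithin n f s ξ / n ! * (nodal t v).eval x := by
  subst ht
  by_cases hxv : ∃ i ∈ t, v i = x
  · obtain ⟨i, hi, rfl⟩ := hxv
    exact ⟨v i, hx, by rw [eval_interpolate_at_node _ hv hi, eval_nodal_at_node hi, sub_self,
      mul_zero]⟩
  push Not at hxv
  obtain ⟨q, hdeg, hqv, hqx, herr⟩ :=
    exists_newton_interpolant hv (fun i hi ↦ (hxv i hi).symm) (fun i ↦ f (v i)) (f x)
  have hcard : t.card < (insert x (t.image v)).card := by
    rw [Finset.card_insert_of_notMem (by simpa only [Finset.mem_image, not_exists, not_and]),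
      Finset.card_image_of_injOn hv]
    exact t.card.lt_succ_self
  have hmem : ∀ y ∈ insert x (t.image v), y ∈ s :=
    Finset.forall_mem_insert _ _ _ |>.2 ⟨hx, Finset.forall_mem_image.2 hvs⟩
  have heval : ∀ y ∈ insert x (t.image v), f y = q.eval y :=
    Finset.forall_mem_insert _ _ _ |>.2
      ⟨hqx.symm, Finset.forall_mem_image.2 fun i hi ↦ (hqv i hi).symm⟩
  obtain ⟨ξ, hξ, hfξ⟩ :=
    exists_iteratedDerivWithin_eq_factorial_mul_coeff hs hu hf hdeg hcard hmem heval
  refine ⟨ξ, hξ, ?_⟩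
  rw [herr, hfξ, mul_div_cancel_left₀ _ (Nat.cast_ne_zero.2 t.card.factorial_ne_zero)]

theorem abs_sub_eval_interpolate_le (hs : s.OrdConnected) (hu : UniqueDiffOn ℝ s)
    (hf : ContDiffOn ℝ n f s) (ht : t.card = n) (hv : Set.InjOn v t) (hvs : ∀ i ∈ t, v i ∈ s)
    (hx : x ∈ s) {M : ℝ} (hM : ∀ y ∈ s, |iteratedDerivWithin n f s y| ≤ M) :
    |f x - (interpolate t v fun i ↦ f (v i)).eval x| ≤ M / n ! * |(nodal t v).eval x| := by
  obtain ⟨ξ, hξ, hfξ⟩ := exists_sub_eval_interpolate_eq hs hu hf ht hv hvs hx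
  rw [hfξ, abs_mul, abs_div, Nat.abs_cast]
  gcongr
  exact hM ξ hξ

end InterpolationError

section StartupNodes

open Lagrange

variable {K : Type*} [Field K] [NeZero (2 : K)]

theorem injective_zero_half_self {h : K} (hh : h ≠ 0) : Function.Injective ![0, h / 2, h] := by
  have hhalf : h / 2 ≠ 0 := div_ne_zero hh two_ne_zero
  have hhalf_self : h / 2 ≠ h := fun heq ↦ hhalf (by linear_combination - heq + add_halves h)
  intro i j
  fin_cases i <;> fin_cases j <;>
    simp [hh, hhalf, hhalf_self, hh.symm, hhalf.symm, hhalf_self.symm]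

theorem eval_two_mul_interpolate_zero_half_self {h : K} (hh : h ≠ 0) (r : Fin 3 → K) :
    (interpolate Finset.univ ![0, h / 2, h] r).eval (2 * h) = 3 * r 0 - 8 * r 1 + 6 * r 2 := by
  set v := ![0, h / 2, h] with hv
  have hbasis (i j k : Fin 3) (hjk : j ≠ k) (hi : Finset.univ.erase i = {j, k}) :
      (Lagrange.basis Finset.univ v i).eval (2 * h) =
        (v i - v j)⁻¹ * (2 * h - v j) * ((v i - v k)⁻¹ * (2 * h - v k)) := by
    simp [Lagrange.basis, basisDivisor, hi, Finset.prod_pair hjk]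
  have hbasis₀ : (Lagrange.basis Finset.univ v 0).eval (2 * h) = 3 := by
    rw [hbasis 0 1 2 (by decide) (by decide)]
    simp only [hv, Matrix.cons_val, zero_sub]
    field_simp
    ring
  have hbasis₁ : (Lagrange.basis Finset.univ v 1).eval (2 * h) = -8 := by
    rw [hbasis 1 0 2 (by decide) (by decide)]
    simp only [hv, Matrix.cons_val, sub_zero]
    field_simp
    ring
  have hbasis₂ : (Lagrange.basis Finset.univ v 2).eval (2 * h) = 6 := by
    rw [hbasis 2 0 1 (by decide) (by decide)]
    simp only [hv, Matrix.cons_val, sub_zero]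
    field_simp
    ring
  simp only [interpolate_apply, Fin.sum_univ_three, Polynomial.eval_add, Polynomial.eval_mul,
    Polynomial.eval_C, hbasis₀, hbasis₁, hbasis₂]
  ring

theorem eval_two_mul_nodal_zero_half_self (h : K) :
    (nodal Finset.univ ![0, h / 2, h]).eval (2 * h) = 3 * h ^ 3 := by
  simp only [eval_nodal, Fin.prod_univ_three, Matrix.cons_val]
  field_simp
  ring

end StartupNodes

/-- Start-up extrapolation error: the quadratic Lagrange extrapolation of `g` at `t₂ = 2h`
from the nodes `0, h/2, h` satisfies `|g(2h) - (3g(0) - 8g(h/2) + 6g(h))| ≤ (‖g‴‖_∞/2) h³`. -/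
theorem startup_extrapolation_error
    (T h : ℝ) (hT : 0 < T) (hh : 0 < h) (g : ℝ → ℝ)
    (hg : ContDiffOn ℝ 3 g (Set.Icc 0 T)) (h2T : 2 * h ≤ T) :
    |g (2 * h) - (3 * g 0 - 8 * g (h / 2) + 6 * g h)|
      ≤ (sSup ((fun t => |iteratedDerivWithin 3 g (Set.Icc (0 : ℝ) T) t|) ''
          Set.Icc (0 : ℝ) T) / 2) * h ^ 3 := by
  have hu : UniqueDiffOn ℝ (Set.Icc 0 T) := uniqueDiffOn_Icc hT
  have hcont : ContinuousOn (iteratedDerivWithin 3 g (Set.Icc 0 T)) (Set.Icc 0 T) :=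
    hg.continuousOn_iteratedDerivWithin le_rfl hu
  have hbdd := isCompact_Icc.bddAbove_image hcont.abs
  have hnodes : ∀ i ∈ Finset.univ, ![0, h / 2, h] i ∈ Set.Icc 0 T := by
    intro i _
    fin_cases i
    exacts [⟨le_rfl, hT.le⟩, ⟨half_pos hh |>.le, (by linarith : h / 2 ≤ T)⟩,
      ⟨hh.le, (by linarith : h ≤ T)⟩]
  have herror := abs_sub_eval_interpolate_le Set.ordConnected_Icc hu hg (Finset.card_fin 3)
    (injective_zero_half_self hh.ne').injOn hnodes (x := 2 * h) ⟨by positivity, h2T⟩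
    fun y hy ↦ le_csSup hbdd (Set.mem_image_of_mem _ hy)
  rw [eval_two_mul_interpolate_zero_half_self hh.ne', eval_two_mul_nodal_zero_half_self,
    abs_of_pos (by positivity : 0 < 3 * h ^ 3)] at herror
  refine herror.trans_eq ?_
  norm_num only [Nat.factorial]
  ring
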